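/- arXiv:2103.12684 — 2 statements merged into one kernel-verified Lean document; each statement's English description precedes it below -/
import Mathlib

section
/- Let μ be a probability measure on ℝ^d. Suppose there exists a constant β > 1 such that for all sufficiently small r > 0 one has s_r(μ) < (log(1/r))^{−β}. Then μ is absolutely continuous with respect to Lebesgue measure on ℝ^d. -/
open MeasureTheory Real

/-- Density of the centered Gaussian on `ℝ^d` with covariance matrix `y • I`. -/
noncomputable def gaussD (d : ℕ) (y : ℝ) (x : EuclideanSpace ℝ (Fin d)) : ℝ :=
  (2 * Real.pi * y) ^ (-(d : ℝ) / 2) * Real.exp (-‖x‖ ^ 2 / (2 * y))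

/-- `∂/∂y n_y (x)`. -/
noncomputable def gaussDy (d : ℕ) (y : ℝ) (x : EuclideanSpace ℝ (Fin d)) : ℝ :=
  deriv (fun u => gaussD d u x) y

/-- The detail of a measure `μ` on `ℝ^d` around the scale `r`. -/
noncomputable def detail (d : ℕ) (μ : Measure (EuclideanSpace ℝ (Fin d))) (r : ℝ) : ℝ :=
  r ^ 2 * (Real.Gamma ((d : ℝ) / 2) / 2) * ((d : ℝ) / (2 * Real.exp 1)) ^ (-(d : ℝ) / 2) *
    ∫ x, |∫ z, gaussDy d (r ^ 2) (x - z) ∂μ|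

noncomputable def gp (d : ℕ) (y : ℝ) (x : EuclideanSpace ℝ (Fin d)) : ℝ :=
  (2 * Real.pi * y) ^ (-(d : ℝ) / 2) * Real.exp (-‖x‖ ^ 2 / (2 * y)) *
    (‖x‖ ^ 2 / (2 * y ^ 2) - d / (2 * y))

lemma gp_hasDeriv (d : ℕ) {y : ℝ} (hy : 0 < y) (x : EuclideanSpace ℝ (Fin d)) :
    HasDerivAt (fun u => gaussD d u x) (gp d y x) y := by
  unfold gaussD gp
  have hpi := Real.pi_pos
  have h1 : HasDerivAt (fun u : ℝ => 2 * Real.pi * u) (2 * Real.pi) y := by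
    simpa using (hasDerivAt_id y).const_mul (2 * Real.pi)
  have h2 := h1.rpow_const (p := -(d : ℝ) / 2) (Or.inl (by positivity))
  have h3 : HasDerivAt (fun u : ℝ => -‖x‖ ^ 2 / (2 * u)) (‖x‖ ^ 2 / (2 * y ^ 2)) y := by
    have h4 : HasDerivAt (fun u : ℝ => 2 * u) 2 y := by
      simpa using (hasDerivAt_id y).const_mul 2
    have := (hasDerivAt_const y (-‖x‖ ^ 2)).div h4 (by positivity)
    refine this.congr_deriv ?_
    field_simp
    ring
  have := h2.mul h3.exp
  refine this.congr_deriv ?_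
  rw [Real.rpow_sub_one (by positivity)]
  field_simp
  ring

lemma gp_eq (d : ℕ) {y : ℝ} (hy : 0 < y) : gaussDy d y = gp d y := by
  funext x
  exact (gp_hasDeriv d hy x).deriv

lemma gp_meas (d : ℕ) : Measurable (fun p : ℝ × EuclideanSpace ℝ (Fin d) => gp d p.1 p.2) := by
  unfold gp
  fun_prop

lemma gaussD_meas (d : ℕ) (y : ℝ) : Measurable (gaussD d y) := by
  unfold gaussD
  fun_prop

lemma gp_bound (d : ℕ) {y : ℝ} (hy : 0 < y) (x : EuclideanSpace ℝ (Fin d)) :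
    |gp d y x| ≤ (2 * Real.pi * y) ^ (-(d : ℝ) / 2) * ((2 + d / 2) / y) *
      Real.exp (-(1 / (4 * y)) * ‖x‖ ^ 2) := by
  unfold gp
  have hpi := Real.pi_pos
  set t := ‖x‖ ^ 2 / (4 * y) with ht
  have ht0 : 0 ≤ t := by positivity
  have e1 : -‖x‖ ^ 2 / (2 * y) = -t + -t := by rw [ht]; field_simp; ring
  have e2 : -(1 / (4 * y)) * ‖x‖ ^ 2 = -t := by rw [ht]; field_simp
  have e3 : ‖x‖ ^ 2 / (2 * y ^ 2) - d / (2 * y) = (2 * t - d / 2) / y := by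
    rw [ht]; field_simp; ring
  rw [e1, e2, e3, Real.exp_add, abs_mul, abs_of_nonneg (by positivity), abs_div, abs_of_pos hy]
  have h1 : |2 * t - d / 2| ≤ 2 * t + d / 2 := by
    rw [abs_le]; constructor <;> nlinarith [(Nat.cast_nonneg d : (0:ℝ) ≤ d)]
  have h2 : t * Real.exp (-t) ≤ 1 := by
    rw [Real.exp_neg, ← div_eq_mul_inv, div_le_one (Real.exp_pos _)]
    linarith [Real.add_one_le_exp t]
  have h3 : Real.exp (-t) ≤ 1 := by simpa using ht0
  have h4 : Real.exp (-t) * |2 * t - d / 2| ≤ 2 + d / 2 := by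
    have := mul_le_mul_of_nonneg_left h1 (Real.exp_pos (-t)).le
    have hd : (0:ℝ) ≤ d := Nat.cast_nonneg d
    nlinarith
  calc _ = (2 * Real.pi * y) ^ (-(d : ℝ) / 2) * ((Real.exp (-t) * |2 * t - d / 2|) / y) *
      Real.exp (-t) := by ring
    _ ≤ _ := by gcongr

lemma exp_int (d : ℕ) {b : ℝ} (hb : 0 < b) :
    Integrable (fun x : EuclideanSpace ℝ (Fin d) => Real.exp (-b * ‖x‖ ^ 2)) := by
  by_contra h
  have h1 := GaussianFourier.integral_rexp_neg_mul_sq_norm (V := EuclideanSpace ℝ (Fin d)) hb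
  rw [integral_undef h] at h1
  have : 0 < (Real.pi / b) ^ ((Module.finrank ℝ (EuclideanSpace ℝ (Fin d)) : ℝ) / 2) := by
    have := Real.pi_pos
    positivity
  linarith

lemma gp_int (d : ℕ) {y : ℝ} (hy : 0 < y) : Integrable (gp d y) := by
  refine Integrable.mono' ((exp_int d (b := 1 / (4 * y)) (by positivity)).const_mul
    ((2 * Real.pi * y) ^ (-(d : ℝ) / 2) * ((2 + d / 2) / y))) ?_ ?_
  · exact ((gp_meas d).comp (measurable_const.prodMk measurable_id)).aestronglyMeasurable
  · filter_upwards with x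
    exact gp_bound d hy x

lemma gaussD_int (d : ℕ) {y : ℝ} (hy : 0 < y) : Integrable (gaussD d y) := by
  have := (exp_int d (b := 1 / (2 * y)) (by positivity)).const_mul
    ((2 * Real.pi * y) ^ (-(d : ℝ) / 2))
  refine this.congr ?_
  filter_upwards with x
  unfold gaussD
  congr 2
  field_simp

lemma gaussD_nonneg (d : ℕ) {y : ℝ} (hy : 0 < y) (x) : 0 ≤ gaussD d y x := by
  unfold gaussD
  have := Real.pi_pos
  positivity

lemma gaussD_le (d : ℕ) {y : ℝ} (hy : 0 < y) (x) :
    gaussD d y x ≤ (2 * Real.pi * y) ^ (-(d : ℝ) / 2) := by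
  unfold gaussD
  have := Real.pi_pos
  have h : Real.exp (-‖x‖ ^ 2 / (2 * y)) ≤ 1 := by
    rw [Real.exp_le_one_iff]
    apply div_nonpos_of_nonpos_of_nonneg
    · simp
    · positivity
  exact mul_le_of_le_one_right (by positivity) h

lemma gaussD_one_lintegral (d : ℕ) :
    ∫⁻ x, ENNReal.ofReal (gaussD d 1 x) = 1 := by
  rw [← ofReal_integral_eq_lintegral_ofReal (gaussD_int d one_pos)
    (Filter.Eventually.of_forall fun x => gaussD_nonneg d one_pos x)]
  have h1 := GaussianFourier.integral_rexp_neg_mul_sq_norm (V := EuclideanSpace ℝ (Fin d))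
    (b := 1 / 2) (by norm_num)
  have h2 : ∫ x, gaussD d 1 x = 1 := by
    have : gaussD d 1 = fun x => (2 * Real.pi) ^ (-(d : ℝ) / 2) * Real.exp (-(1/2) * ‖x‖ ^ 2) := by
      funext x
      unfold gaussD
      rw [mul_one]
      congr 2
      ring
    have hpi := Real.pi_pos
    rw [this, integral_const_mul, h1, finrank_euclideanSpace, Fintype.card_fin, neg_div,
      Real.rpow_neg (by positivity)]
    have : Real.pi / (1/2) = 2 * Real.pi := by ring
    rw [this]
    apply inv_mul_cancel₀
    positivity
  rw [h2]; simp

lemma ind_meas {d : ℕ} {U : Set (EuclideanSpace ℝ (Fin d))} (hU : IsOpen U) (t : ℝ) :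
    Measurable (fun p : EuclideanSpace ℝ (Fin d) × EuclideanSpace ℝ (Fin d) =>
      U.indicator (1 : EuclideanSpace ℝ (Fin d) → ENNReal) (p.1 + t • p.2) *
        ENNReal.ofReal (gaussD d 1 p.2)) := by
  have hUm : Measurable (U.indicator (1 : EuclideanSpace ℝ (Fin d) → ENNReal)) :=
    measurable_one.indicator hU.measurableSet
  have h1 : Measurable (fun p : EuclideanSpace ℝ (Fin d) × EuclideanSpace ℝ (Fin d) =>
      p.1 + t • p.2) := by fun_prop
  exact (hUm.comp h1).mul ((gaussD_meas d 1).comp measurable_snd).ennreal_ofReal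

section conv
variable {d : ℕ} (μ : Measure (EuclideanSpace ℝ (Fin d))) [IsProbabilityMeasure μ]

lemma conv_int {g : EuclideanSpace ℝ (Fin d) → ℝ} (hg : Integrable g) (hm : Measurable g) :
    Integrable (fun x => ∫ z, g (x - z) ∂μ) := by
  have hm2 : Measurable (fun p : EuclideanSpace ℝ (Fin d) × EuclideanSpace ℝ (Fin d) =>
      g (p.1 - p.2)) := hm.comp (measurable_fst.sub measurable_snd)
  refine ⟨?_, ?_⟩
  · exact (StronglyMeasurable.integral_prod_right (ν := μ)
      (f := fun x z => g (x - z)) hm2.stronglyMeasurable).aestronglyMeasurable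
  · unfold HasFiniteIntegral
    calc ∫⁻ x, ‖∫ z, g (x - z) ∂μ‖ₑ ≤ ∫⁻ x, ∫⁻ z, ‖g (x - z)‖ₑ ∂μ :=
          lintegral_mono fun x => enorm_integral_le_lintegral_enorm _
      _ = ∫⁻ z, ∫⁻ x, ‖g (x - z)‖ₑ ∂volume ∂μ :=
          lintegral_lintegral_swap (hm2.enorm.aemeasurable)
      _ = ∫⁻ z, ∫⁻ x, ‖g x‖ₑ ∂volume ∂μ := by
          congr 1; funext z
          exact lintegral_sub_right_eq_self (fun x => ‖g x‖ₑ) z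
      _ < ⊤ := by
          simp only [lintegral_const, measure_univ, mul_one]
          exact hg.2

lemma ftc_swap {a b : ℝ} (ha : 0 < a) (hab : a ≤ b) (x : EuclideanSpace ℝ (Fin d)) :
    ‖(∫ z, gaussD d a (x - z) ∂μ) - ∫ z, gaussD d b (x - z) ∂μ‖ₑ ≤
      ∫⁻ y in Set.Ioc a b, ‖∫ z, gp d y (x - z) ∂μ‖ₑ := by
  have hpi := Real.pi_pos
  set C := (2 * Real.pi * a) ^ (-(d : ℝ) / 2) * ((2 + d / 2) / a) with hC
  have hbd : ∀ y ∈ Set.Icc a b, ∀ u, ‖gp d y u‖ ≤ C := by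
    intro y hy u
    have hy0 : 0 < y := ha.trans_le hy.1
    refine (gp_bound d hy0 u).trans ?_
    have h1 : Real.exp (-(1 / (4 * y)) * ‖u‖ ^ 2) ≤ 1 := by
      rw [Real.exp_le_one_iff, neg_mul]
      have : 0 ≤ 1 / (4 * y) * ‖u‖ ^ 2 := by positivity
      linarith
    refine (mul_le_of_le_one_right (by positivity) h1).trans ?_
    rw [hC]
    have h2 : (2 * Real.pi * y) ^ (-(d : ℝ) / 2) ≤ (2 * Real.pi * a) ^ (-(d : ℝ) / 2) := by
      apply Real.rpow_le_rpow_of_nonpos (by positivity)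
      · have := hy.1
        gcongr
      · rw [neg_div]; simp; positivity
    have h3 : (2 + (d:ℝ) / 2) / y ≤ (2 + d / 2) / a := by
      have := hy.1
      gcongr
    gcongr
  have hmz : ∀ y u, 0 < y → Integrable (fun z => gaussD d y (u - z)) μ := by
    intro y u hy
    refine Integrable.of_bound ((gaussD_meas d y).comp
      (measurable_const.sub measurable_id)).aestronglyMeasurable
      ((2 * Real.pi * y) ^ (-(d : ℝ) / 2)) ?_
    filter_upwards with z
    rw [Real.norm_of_nonneg (gaussD_nonneg d hy _)]
    exact gaussD_le d hy _
  have hftc : ∀ u, gaussD d b u - gaussD d a u = ∫ y in Set.Ioc a b, gp d y u := by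
    intro u
    rw [← intervalIntegral.integral_of_le hab]
    symm
    apply intervalIntegral.integral_eq_sub_of_hasDerivAt (f := fun y => gaussD d y u)
    · intro y hy
      rw [Set.uIcc_of_le hab] at hy
      exact gp_hasDeriv d (ha.trans_le hy.1) u
    · rw [intervalIntegrable_iff_integrableOn_Ioc_of_le hab]
      refine Integrable.of_bound ((gp_meas d).comp
        (measurable_id.prodMk measurable_const)).aestronglyMeasurable C ?_
      filter_upwards [ae_restrict_mem measurableSet_Ioc] with y hy
      exact hbd y ⟨hy.1.le, hy.2⟩ u
  have hkey : (∫ z, gaussD d b (x - z) ∂μ) - ∫ z, gaussD d a (x - z) ∂μ =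
      ∫ y in Set.Ioc a b, ∫ z, gp d y (x - z) ∂μ := by
    rw [← integral_sub (hmz b x (ha.trans_le hab)) (hmz a x ha)]
    simp_rw [hftc]
    symm
    apply integral_integral_swap
    refine Integrable.of_bound ((gp_meas d).comp
      (measurable_fst.prodMk (measurable_const.sub measurable_snd))).aestronglyMeasurable C ?_
    have : ∀ᵐ p ∂((volume.restrict (Set.Ioc a b)).prod μ), p.1 ∈ Set.Ioc a b :=
      Measure.quasiMeasurePreserving_fst.ae (ae_restrict_mem measurableSet_Ioc)
    filter_upwards [this] with p hp
    exact hbd p.1 ⟨hp.1.le, hp.2⟩ _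
  rw [← enorm_neg, neg_sub, hkey]
  exact enorm_integral_le_lintegral_enorm _

lemma diff_bound {a b : ℝ} (ha : 0 < a) (hab : a ≤ b) :
    ∫⁻ x, ‖(∫ z, gaussD d a (x - z) ∂μ) - ∫ z, gaussD d b (x - z) ∂μ‖ₑ ≤
      ∫⁻ y in Set.Ioc a b, ENNReal.ofReal (∫ x, |∫ z, gaussDy d y (x - z) ∂μ|) := by
  have hm : StronglyMeasurable (fun p : EuclideanSpace ℝ (Fin d) × ℝ =>
      ∫ z, gp d p.2 (p.1 - z) ∂μ) := by
    apply StronglyMeasurable.integral_prod_right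
    exact ((gp_meas d).comp ((measurable_snd.comp measurable_fst).prodMk
      ((measurable_fst.comp measurable_fst).sub measurable_snd))).stronglyMeasurable
  calc _ ≤ ∫⁻ x, ∫⁻ y in Set.Ioc a b, ‖∫ z, gp d y (x - z) ∂μ‖ₑ :=
        lintegral_mono fun x => ftc_swap μ ha hab x
    _ = ∫⁻ y in Set.Ioc a b, ∫⁻ x, ‖∫ z, gp d y (x - z) ∂μ‖ₑ :=
        lintegral_lintegral_swap hm.enorm.aemeasurable
    _ = _ := by
        apply setLIntegral_congr_fun measurableSet_Ioc
        intro y hy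
        have hy0 : 0 < y := ha.trans hy.1
        simp only [gp_eq d hy0]
        rw [← ofReal_integral_norm_eq_lintegral_enorm
          (conv_int μ (gp_int d hy0) ((gp_meas d).comp (measurable_const.prodMk measurable_id)))]
        rfl

lemma lint_scale {t : ℝ} (ht : 0 < t) {U : Set (EuclideanSpace ℝ (Fin d))} (hU : IsOpen U) :
    ∫⁻ x in U, ENNReal.ofReal (∫ z, gaussD d (t ^ 2) (x - z) ∂μ) =
     ∫⁻ p : EuclideanSpace ℝ (Fin d) × EuclideanSpace ℝ (Fin d),
      U.indicator 1 (p.1 + t • p.2) * ENNReal.ofReal (gaussD d 1 p.2) ∂(μ.prod volume) := by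
  have hpi := Real.pi_pos
  have ht2 : 0 < t ^ 2 := by positivity
  have hUm : Measurable (U.indicator (1 : EuclideanSpace ℝ (Fin d) → ENNReal)) :=
    measurable_one.indicator hU.measurableSet
  have hg : Measurable (fun x => ENNReal.ofReal (gaussD d (t ^ 2) x)) :=
    (gaussD_meas d _).ennreal_ofReal
  have h0 : ∀ x, ENNReal.ofReal (∫ z, gaussD d (t ^ 2) (x - z) ∂μ) =
      ∫⁻ z, ENNReal.ofReal (gaussD d (t ^ 2) (x - z)) ∂μ := by
    intro x
    apply ofReal_integral_eq_lintegral_ofReal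
    · refine Integrable.of_bound ((gaussD_meas d _).comp
        (measurable_const.sub measurable_id)).aestronglyMeasurable
        ((2 * Real.pi * t ^ 2) ^ (-(d : ℝ) / 2)) ?_
      filter_upwards with z
      rw [Real.norm_of_nonneg (gaussD_nonneg d ht2 _)]
      exact gaussD_le d ht2 _
    · exact Filter.Eventually.of_forall fun z => gaussD_nonneg d ht2 _
  rw [lintegral_prod _ (by
    apply Measurable.aemeasurable
    exact (hUm.comp (measurable_fst.add (measurable_snd.const_smul t))).mul
      ((gaussD_meas d 1).comp measurable_snd).ennreal_ofReal)]
  simp_rw [h0]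
  rw [lintegral_lintegral_swap (f := fun x z => ENNReal.ofReal (gaussD d (t ^ 2) (x - z)))
    (hg.comp (measurable_fst.sub measurable_snd)).aemeasurable]
  congr 1
  funext z
  rw [← lintegral_indicator hU.measurableSet]
  have h1 : (fun x => U.indicator (fun x => ENNReal.ofReal (gaussD d (t ^ 2) (x - z))) x) =
     fun x => U.indicator 1 (z + (x - z)) * ENNReal.ofReal (gaussD d (t ^ 2) (x - z)) := by
    funext x
    by_cases hx : x ∈ U <;> simp [hx]
  rw [h1, lintegral_sub_right_eq_self
    (fun u => U.indicator 1 (z + u) * ENNReal.ofReal (gaussD d (t ^ 2) u)) z]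
  have h2 := Measure.map_addHaar_smul (volume : Measure (EuclideanSpace ℝ (Fin d))) ht.ne'
  have hF : Measurable (fun u => U.indicator 1 (z + u) * ENNReal.ofReal (gaussD d (t ^ 2) u)) :=
    (hUm.comp (measurable_const.add measurable_id)).mul hg
  have h3 := lintegral_map (μ := (volume : Measure (EuclideanSpace ℝ (Fin d)))) hF
    (measurable_const_smul t)
  have h4 : ∀ w, ENNReal.ofReal (gaussD d (t ^ 2) (t • w)) =
      ENNReal.ofReal |(t ^ d)⁻¹| * ENNReal.ofReal (gaussD d 1 w) := by
    intro w
    rw [← ENNReal.ofReal_mul (abs_nonneg _)]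
    congr 1
    unfold gaussD
    rw [Real.mul_rpow (by positivity) (by positivity), abs_of_pos (by positivity), mul_one,
      norm_smul, Real.norm_of_nonneg ht.le]
    have e1 : (t ^ 2) ^ (-(d:ℝ) / 2) = (t ^ d)⁻¹ := by
      rw [← Real.rpow_natCast t 2, ← Real.rpow_mul ht.le, ← Real.rpow_natCast t d,
        ← Real.rpow_neg ht.le]
      congr 1
      push_cast
      ring
    have e2 : -(t * ‖w‖) ^ 2 / (2 * t ^ 2) = -‖w‖ ^ 2 / (2 * 1) := by field_simp
    rw [e1, e2]
    simp only [mul_one]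
    ring
  rw [h2, lintegral_smul_measure, finrank_euclideanSpace, Fintype.card_fin] at h3
  simp_rw [h4] at h3
  have h5 : ∀ w, U.indicator (1 : EuclideanSpace ℝ (Fin d) → ENNReal) (z + t • w) *
      (ENNReal.ofReal |(t ^ d)⁻¹| * ENNReal.ofReal (gaussD d 1 w)) = ENNReal.ofReal |(t ^ d)⁻¹| *
      (U.indicator 1 (z + t • w) * ENNReal.ofReal (gaussD d 1 w)) := fun w => by ring
  simp_rw [h5] at h3
  rw [lintegral_const_mul' _ _ ENNReal.ofReal_ne_top, smul_eq_mul] at h3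
  refine (ENNReal.mul_right_inj ?_ ENNReal.ofReal_ne_top).1 h3
  rw [ENNReal.ofReal_ne_zero_iff]
  positivity

lemma weak_le {U : Set (EuclideanSpace ℝ (Fin d))} (hU : IsOpen U) (B : ENNReal) {t₀ : ℝ}
    (ht₀ : 0 < t₀)
    (hB : ∀ t, 0 < t → t < t₀ → ∫⁻ x in U, ENNReal.ofReal (∫ z, gaussD d (t ^ 2) (x - z) ∂μ) ≤ B) :
    μ U ≤ B := by
  have hUm : Measurable (U.indicator (1 : EuclideanSpace ℝ (Fin d) → ENNReal)) :=
    measurable_one.indicator hU.measurableSet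
  obtain ⟨τ, hτ, htend⟩ : ∃ τ : ℕ → ℝ, (∀ n, 0 < τ n) ∧
      Filter.Tendsto τ Filter.atTop (nhds 0) :=
    ⟨fun n => 1 / ((n : ℝ) + 1), fun n => by positivity,
      tendsto_one_div_add_atTop_nhds_zero_nat (𝕜 := ℝ)⟩
  let f : ℕ → EuclideanSpace ℝ (Fin d) × EuclideanSpace ℝ (Fin d) → ENNReal := fun n p =>
    U.indicator 1 (p.1 + τ n • p.2) * ENNReal.ofReal (gaussD d 1 p.2)
  have hfm : ∀ n, Measurable (f n) := fun n => ind_meas hU (τ n)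
  have hfat := lintegral_liminf_le (μ := μ.prod volume) (u := Filter.atTop) hfm
  have h1 : Filter.liminf (fun n => ∫⁻ p, f n p ∂(μ.prod volume)) Filter.atTop ≤ B := by
    refine Filter.liminf_le_of_frequently_le' (Filter.Eventually.frequently ?_)
    filter_upwards [htend.eventually (gt_mem_nhds ht₀)] with n hn
    exact (lint_scale μ (hτ n) hU).symm.le.trans (hB _ (hτ n) hn)
  have h2 : μ U = ∫⁻ p, U.indicator 1 p.1 * ENNReal.ofReal (gaussD d 1 p.2) ∂(μ.prod volume) := by
    rw [lintegral_prod_mul (f := U.indicator 1) (g := fun w => ENNReal.ofReal (gaussD d 1 w))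
      hUm.aemeasurable (gaussD_meas d 1).ennreal_ofReal.aemeasurable, gaussD_one_lintegral,
      mul_one, lintegral_indicator_one hU.measurableSet]
  rw [h2]
  refine le_trans (lintegral_mono fun p => ?_) (hfat.trans h1)
  by_cases hp : p.1 ∈ U
  · apply Filter.le_liminf_of_le (by isBoundedDefault)
    have hc : Filter.Tendsto (fun n : ℕ => p.1 + τ n • p.2) Filter.atTop
        (nhds p.1) := by
      simpa using (htend.smul_const p.2).const_add p.1
    filter_upwards [hc.eventually (hU.mem_nhds hp)] with n hn
    change _ ≤ U.indicator 1 (p.1 + τ n • p.2) * ENNReal.ofReal (gaussD d 1 p.2)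
    rw [Set.indicator_of_mem hp, Set.indicator_of_mem hn]
    simp
  · simp [hp]

end conv

lemma log_int {β : ℝ} (hβ : 1 < β) {a b : ℝ} (ha : 0 < a) (hab : a ≤ b) (hb : b < 1) :
    ∫⁻ y in Set.Ioc a b, ENNReal.ofReal (y⁻¹ * (-Real.log y) ^ (-β)) ≤
      ENNReal.ofReal ((-Real.log b) ^ (1 - β) / (β - 1)) := by
  have hpos : ∀ y ∈ Set.Icc a b, 0 < y ∧ 0 < -Real.log y := fun y hy =>
    ⟨ha.trans_le hy.1, by
      have := Real.log_neg (ha.trans_le hy.1) (hy.2.trans_lt hb); linarith⟩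
  have hcont : ContinuousOn (fun y : ℝ => y⁻¹ * (-Real.log y) ^ (-β)) (Set.Icc a b) := by
    intro y hy
    obtain ⟨h1, h2⟩ := hpos y hy
    apply ContinuousAt.continuousWithinAt
    exact (continuousAt_inv₀ h1.ne').mul
      ((Real.continuousAt_log h1.ne').neg.rpow_const (Or.inl h2.ne'))
  have hint : IntegrableOn (fun y : ℝ => y⁻¹ * (-Real.log y) ^ (-β)) (Set.Ioc a b) :=
    hcont.integrableOn_Icc.mono_set Set.Ioc_subset_Icc_self
  rw [← ofReal_integral_eq_lintegral_ofReal hint ?_]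
  · apply ENNReal.ofReal_le_ofReal
    rw [← intervalIntegral.integral_of_le hab]
    rw [intervalIntegral.integral_eq_sub_of_hasDerivAt
      (f := fun y => (-Real.log y) ^ (1 - β) / (β - 1))]
    · have := (hpos a ⟨le_rfl, hab⟩).2
      have h2 : 0 ≤ (-Real.log a) ^ (1 - β) / (β - 1) :=
        div_nonneg (Real.rpow_nonneg this.le _) (by linarith)
      linarith
    · intro y hy
      rw [Set.uIcc_of_le hab] at hy
      obtain ⟨h1, h2⟩ := hpos y hy
      have := (((Real.hasDerivAt_log h1.ne').neg.rpow_const (p := 1 - β)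
        (Or.inl h2.ne')).div_const (β - 1))
      refine this.congr_deriv ?_
      simp only [Pi.neg_apply]
      have e : 1 - β - 1 = -β := by ring
      have hb1 : β - 1 ≠ 0 := by linarith
      rw [e]
      field_simp
      ring
    · rw [intervalIntegrable_iff_integrableOn_Ioc_of_le hab]
      exact hint
  · filter_upwards [ae_restrict_mem measurableSet_Ioc] with y hy
    obtain ⟨h1, h2⟩ := hpos y ⟨hy.1.le, hy.2⟩
    simp only [Pi.zero_apply]
    positivity

theorem statement4 {d : ℕ} (μ : Measure (EuclideanSpace ℝ (Fin d)))
    [IsProbabilityMeasure μ] (β : ℝ) (hβ : 1 < β)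
    (h : ∃ r₀ > (0 : ℝ), ∀ r, 0 < r → r < r₀ → detail d μ r < Real.log r⁻¹ ^ (-β)) :
    μ ≪ volume := by
  obtain ⟨r₀, hr₀, h⟩ := h
  rcases Nat.eq_zero_or_pos d with hd | hd
  · subst hd
    intro s hs
    have : s = ∅ := by
      by_contra hne
      obtain ⟨x, hx⟩ := Set.nonempty_iff_ne_empty.2 hne
      have : s = Set.univ := Set.eq_univ_of_forall fun y => by
        rwa [Subsingleton.elim y x]
      rw [this] at hs
      exact isOpen_univ.measure_ne_zero volume Set.univ_nonempty hs
    simp [this]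
  have hdR : (0:ℝ) < d := by exact_mod_cast hd
  set K : ℝ := (Real.Gamma ((d : ℝ) / 2) / 2) * ((d : ℝ) / (2 * Real.exp 1)) ^ (-(d : ℝ) / 2)
    with hK
  have hK0 : 0 < K := by
    have := Real.Gamma_pos_of_pos (s := (d:ℝ) / 2) (by positivity)
    positivity
  -- bound on the norm
  set C : ℝ := K⁻¹ * 2 ^ β with hC
  have hC0 : 0 < C := by positivity
  have hbd : ∀ y, 0 < y → y < r₀ ^ 2 → y < 1 →
      ∫ x, |∫ z, gaussDy d y (x - z) ∂μ| ≤ C * (y⁻¹ * (-Real.log y) ^ (-β)) := by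
    intro y hy hy1 hy2
    have h1 := h (Real.sqrt y) (Real.sqrt_pos.2 hy) ((Real.sqrt_lt' hr₀).2 hy1)
    unfold detail at h1
    have hl : 0 < -Real.log y := by have := Real.log_neg hy hy2; linarith
    rw [Real.sq_sqrt hy.le, Real.log_inv, Real.log_sqrt hy.le] at h1
    have e : -(Real.log y / 2) = (-Real.log y) / 2 := by ring
    rw [e, Real.div_rpow hl.le (by norm_num), Real.rpow_neg (by norm_num : (0:ℝ) ≤ 2)] at h1
    have h2 : y * K * ∫ x, |∫ z, gaussDy d y (x - z) ∂μ| < (-Real.log y) ^ (-β) * 2 ^ β := by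
      rw [hK]
      calc _ = _ := by ring
        _ < _ := h1
        _ = _ := by rw [div_inv_eq_mul]
    rw [mul_comm, ← lt_div_iff₀ (by positivity)] at h2
    refine h2.le.trans (le_of_eq ?_)
    rw [hC]
    field_simp
  have hdiff : ∀ a b, 0 < a → a ≤ b → b < r₀ ^ 2 → b < 1 →
      ∫⁻ x, ‖(∫ z, gaussD d a (x - z) ∂μ) - ∫ z, gaussD d b (x - z) ∂μ‖ₑ ≤
        ENNReal.ofReal (C * ((-Real.log b) ^ (1 - β) / (β - 1))) := by
    intro a b ha hab hb1 hb2
    refine (diff_bound μ ha hab).trans ?_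
    rw [ENNReal.ofReal_mul hC0.le]
    refine le_trans ?_ (mul_le_mul_right (log_int hβ ha hab hb2) _)
    rw [← lintegral_const_mul' _ _ ENNReal.ofReal_ne_top]
    apply setLIntegral_mono' measurableSet_Ioc
    intro y hy
    rw [← ENNReal.ofReal_mul hC0.le]
    exact ENNReal.ofReal_le_ofReal (hbd y (ha.trans hy.1) (hy.2.trans_lt hb1) (hy.2.trans_lt hb2))
  have htend : Filter.Tendsto (fun b : ℝ => ENNReal.ofReal
      (C * ((-Real.log b) ^ (1 - β) / (β - 1)))) (nhdsWithin 0 (Set.Ioi 0)) (nhds 0) := by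
    have h1 : Filter.Tendsto (fun b : ℝ => -Real.log b) (nhdsWithin 0 (Set.Ioi 0)) Filter.atTop :=
      Filter.tendsto_neg_atBot_atTop.comp Real.tendsto_log_nhdsGT_zero
    have h2 := (tendsto_rpow_neg_atTop (y := β - 1) (by linarith)).comp h1
    have h3 := ENNReal.tendsto_ofReal ((h2.div_const (β - 1)).const_mul C)
    simpa using h3
  intro s hs
  by_contra hne
  obtain ⟨ε, hε0, hε⟩ : ∃ ε : ENNReal, ε ≠ 0 ∧ ε + ε < μ s := by
    refine ⟨μ s / 4, by simp [hne], ?_⟩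
    have : μ s / 4 + μ s / 4 = μ s / 2 := by
      rw [← two_mul, ← mul_div_assoc, mul_comm 2, div_eq_mul_inv, div_eq_mul_inv, mul_assoc]
      congr 1
      rw [show (4 : ENNReal) = 2 * 2 by norm_num, ENNReal.mul_inv (by simp) (by simp), ← mul_assoc,
        ENNReal.mul_inv_cancel (by simp) (by simp), one_mul]
    rw [this]
    exact ENNReal.half_lt_self hne (measure_ne_top _ _)
  obtain ⟨b, hb, hb0, hb1, hb2⟩ : ∃ b : ℝ, ENNReal.ofReal
      (C * ((-Real.log b) ^ (1 - β) / (β - 1))) < ε ∧ 0 < b ∧ b < r₀ ^ 2 ∧ b < 1 := by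
    have e1 := htend.eventually (gt_mem_nhds (pos_iff_ne_zero.2 hε0))
    have e2 : ∀ᶠ b : ℝ in nhdsWithin 0 (Set.Ioi 0), b < r₀ ^ 2 :=
      nhdsWithin_le_nhds (gt_mem_nhds (by positivity))
    have e3 : ∀ᶠ b : ℝ in nhdsWithin 0 (Set.Ioi 0), b < 1 :=
      nhdsWithin_le_nhds (gt_mem_nhds (by positivity))
    have e4 : ∀ᶠ b : ℝ in nhdsWithin 0 (Set.Ioi 0), 0 < b := self_mem_nhdsWithin
    exact (e1.and (e4.and (e2.and e3))).exists
  have hFb := conv_int μ (gaussD_int d hb0) (gaussD_meas d b)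
  obtain ⟨δ, hδ, hδ'⟩ := exists_pos_setLIntegral_lt_of_measure_lt (μ := volume)
    (f := fun x => ‖∫ z, gaussD d b (x - z) ∂μ‖ₑ) hFb.2.ne hε0
  obtain ⟨U, hsU, hU, hUδ⟩ := Set.exists_isOpen_lt_of_lt s δ (by rw [hs]; exact hδ)
  have : μ U ≤ ε + ε := by
    refine weak_le μ hU _ (Real.sqrt_pos.2 hb0) fun t ht htb => ?_
    have htb' : t ^ 2 ≤ b := (Real.lt_sqrt ht.le).1 htb |>.le
    have ht2 : 0 < t ^ 2 := by positivity
    have hFm := conv_int μ (gaussD_int d hb0) (gaussD_meas d b)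
    calc _ ≤ ∫⁻ x in U, (‖∫ z, gaussD d b (x - z) ∂μ‖ₑ +
          ‖(∫ z, gaussD d (t ^ 2) (x - z) ∂μ) - ∫ z, gaussD d b (x - z) ∂μ‖ₑ) := by
          refine lintegral_mono fun x => ?_
          refine (Real.ofReal_le_enorm _).trans ?_
          refine le_trans (le_of_eq ?_) (enorm_add_le _ _)
          congr 1
          ring
      _ = _ := lintegral_add_left' hFm.1.enorm.restrict _
      _ ≤ ε + ε := by
          refine add_le_add (hδ' U hUδ).le ?_
          refine (setLIntegral_le_lintegral _ _).trans ?_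
          exact (hdiff _ b ht2 htb' hb1 hb2).trans hb.le
  exact absurd ((measure_mono hsU).trans this) (not_le.2 hε)
end

section
/- Let μ and ν be probability measures on ℝ^d and let y > 0. Then ‖ μ * ν * (∂n_y/∂y) ‖₁ ≤ ‖ ν * (∂n_y/∂y) ‖₁. Moreover, ∫_{ℝ^d} | (∂/∂y) n_y(x) | dx = (1/y) · (2/Γ(d/2)) · (d/(2e))^{d/2}, so in particular ‖ μ * (∂n_y/∂y) ‖₁ ≤ (1/y) · (2/Γ(d/2)) · (d/(2e))^{d/2}. -/
open MeasureTheory Real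

lemma gaussDy_eq (d : ℕ) (y : ℝ) (hy : 0 < y) (x : EuclideanSpace ℝ (Fin d)) :
    gaussDy d y x = (2 * Real.pi * y) ^ (-(d : ℝ) / 2) *
      (Real.exp (-‖x‖ ^ 2 / (2 * y)) * (‖x‖ ^ 2 / (2 * y ^ 2) - d / (2 * y))) := by
  unfold gaussDy gaussD
  have hp : 0 < 2 * Real.pi * y := by positivity
  have h1 : HasDerivAt (fun u : ℝ => 2 * Real.pi * u) (2 * Real.pi) y := by
    simpa using (hasDerivAt_id y).const_mul (2 * Real.pi)
  have h2 := h1.rpow_const (p := -(d : ℝ) / 2) (Or.inl hp.ne')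
  have h3 : HasDerivAt (fun u : ℝ => -‖x‖ ^ 2 / (2 * u)) (‖x‖ ^ 2 / (2 * y ^ 2)) y := by
    have h4 : HasDerivAt (fun u : ℝ => 2 * u) 2 y := by
      simpa using (hasDerivAt_id y).const_mul (2 : ℝ)
    have := (hasDerivAt_const y (-‖x‖ ^ 2)).div h4 (by positivity)
    refine this.congr_deriv ?_
    field_simp
    ring
  have h := (h2.mul h3.exp).deriv
  refine h.trans ?_
  rw [Real.rpow_sub_one hp.ne']
  field_simp
  ring

lemma radial (m : ℕ) (y : ℝ) (hy : 0 < y) :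
    IntegrableOn (fun r : ℝ => |r ^ m * (Real.exp (-r ^ 2 / (2 * y)) * (r ^ 2 / y - (m + 1)))|)
      (Set.Ioi 0) ∧
    ∫ r in Set.Ioi (0 : ℝ), |r ^ m * (Real.exp (-r ^ 2 / (2 * y)) * (r ^ 2 / y - (m + 1)))| =
      2 * (√((m + 1) * y) ^ (m + 1) * Real.exp (-((m : ℝ) + 1) / 2)) := by
  set g : ℝ → ℝ := fun r => r ^ m * (Real.exp (-r ^ 2 / (2 * y)) * (r ^ 2 / y - (m + 1))) with hg
  set G : ℝ → ℝ := fun r => r ^ (m + 1) * Real.exp (-r ^ 2 / (2 * y)) with hG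
  have hgc : Continuous g := by fun_prop
  have hd : ∀ r, HasDerivAt G (-g r) r := by
    intro r
    have h1 : HasDerivAt (fun r : ℝ => -r ^ 2 / (2 * y)) (- (2 * r) / (2 * y)) r := by
      have := ((hasDerivAt_pow 2 r).neg).div_const (2 * y)
      simpa using this
    have := (hasDerivAt_pow (m + 1) r).mul h1.exp
    refine this.congr_deriv ?_
    simp only [hg]
    push_cast
    field_simp
    ring
  set R := √((m + 1) * y) with hR
  have hR0 : 0 < R := Real.sqrt_pos.2 (by positivity)
  have hR2 : R ^ 2 = (m + 1) * y := Real.sq_sqrt (by positivity)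
  have hGR : G R = R ^ (m + 1) * Real.exp (-((m : ℝ) + 1) / 2) := by
    simp only [hG, hR2]
    congr 2
    field_simp
  have hG0 : G 0 = 0 := by simp [hG]
  have hlim : Filter.Tendsto G Filter.atTop (nhds 0) := by
    have := (rpow_mul_exp_neg_mul_sq_isLittleO_exp_neg (b := 1 / (2 * y)) (by positivity)
      ((m : ℝ) + 1)).tendsto_zero_of_tendsto
      (Real.tendsto_exp_atBot.comp <| Filter.tendsto_id.const_mul_atTop_of_neg
        (neg_lt_zero.mpr one_half_pos))
    refine this.congr fun r => ?_
    simp only [hG]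
    congr 1
    · exact_mod_cast Real.rpow_natCast r (m + 1)
    · congr 1; ring
  have hpos : ∀ r ∈ Set.Ioi R, 0 ≤ g r := by
    intro r hr
    have hr0 : 0 < r := hR0.trans hr
    have : 0 ≤ r ^ 2 / y - (m + 1) := by
      rw [sub_nonneg, le_div_iff₀ hy, ← hR2]
      exact pow_le_pow_left₀ hR0.le (le_of_lt hr) 2
    positivity
  have hneg : ∀ r ∈ Set.Ioc 0 R, g r ≤ 0 := by
    intro r hr
    have hr0 : 0 < r := hr.1
    have : r ^ 2 / y - (m + 1) ≤ 0 := by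
      rw [sub_nonpos, div_le_iff₀ hy, ← hR2]
      exact pow_le_pow_left₀ hr0.le hr.2 2
    exact mul_nonpos_of_nonneg_of_nonpos (by positivity)
      (mul_nonpos_of_nonneg_of_nonpos (by positivity) this)
  have i1 : IntegrableOn (fun r => |g r|) (Set.Ioc 0 R) :=
    (hgc.abs.continuousOn.integrableOn_Icc).mono_set Set.Ioc_subset_Icc_self
  have i2' : IntegrableOn (fun r => - g r) (Set.Ioi R) :=
    integrableOn_Ioi_deriv_of_nonpos' (fun r _ => hd r)
      (fun r hr => neg_nonpos.2 (hpos r hr)) hlim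
  have i2 : IntegrableOn (fun r => |g r|) (Set.Ioi R) := by
    have := i2'.abs
    simp only [abs_neg] at this
    exact this
  have e1 : ∫ r in Set.Ioc 0 R, |g r| = G R := by
    rw [setIntegral_congr_fun (g := fun r => - g r) measurableSet_Ioc
      (fun r hr => abs_of_nonpos (hneg r hr)), ← intervalIntegral.integral_of_le hR0.le,
      intervalIntegral.integral_eq_sub_of_hasDerivAt (fun r _ => hd r)
      (hgc.neg.intervalIntegrable _ _), hG0, sub_zero]
  have e2 : ∫ r in Set.Ioi R, |g r| = G R := by
    rw [setIntegral_congr_fun (g := fun r => g r) measurableSet_Ioi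
      (fun r hr => abs_of_nonneg (hpos r hr))]
    have := integral_Ioi_of_hasDerivAt_of_nonpos' (fun r _ => hd r)
      (fun r hr => neg_nonpos.2 (hpos r hr)) hlim
    rw [integral_neg] at this
    linarith
  rw [← Set.Ioc_union_Ioi_eq_Ioi hR0.le]
  refine ⟨i1.union i2, ?_⟩
  rw [setIntegral_union (Set.Ioc_disjoint_Ioi le_rfl) measurableSet_Ioi i1 i2, e1, e2, hGR]
  ring

lemma gaussDy_main (d : ℕ) (y : ℝ) (hy : 0 < y) :
    Integrable (gaussDy d y) ∧ ∫ x, |gaussDy d y x| =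
      1 / y * (2 / Real.Gamma ((d : ℝ) / 2)) *
        ((d : ℝ) / (2 * Real.exp 1)) ^ ((d : ℝ) / 2) := by
  have hc : Continuous (gaussDy d y) := by
    rw [funext (gaussDy_eq d y hy)]
    fun_prop
  rcases d with _ | m
  · have : gaussDy 0 y = fun _ => 0 := by
      funext x
      rw [gaussDy_eq 0 y hy, Subsingleton.elim x 0]
      simp
    simp [this]
  obtain ⟨hi, he⟩ := radial m y hy
  set C : ℝ := (2 * Real.pi * y) ^ (-((m + 1 : ℕ) : ℝ) / 2) / (2 * y) with hC
  have hC0 : 0 < C := by positivity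
  set f : ℝ → ℝ := fun r => C * |Real.exp (-r ^ 2 / (2 * y)) * (r ^ 2 / y - (m + 1))| with hf
  have habs : ∀ x, |gaussDy (m + 1) y x| = f ‖x‖ := by
    intro x
    rw [gaussDy_eq _ y hy]
    simp only [hf]
    rw [← abs_of_pos hC0, ← abs_mul, hC]
    congr 1
    push_cast
    field_simp
  have hr : Set.EqOn (fun r : ℝ => r ^ m * f r) (fun r => C *
      |r ^ m * (Real.exp (-r ^ 2 / (2 * y)) * (r ^ 2 / y - (m + 1)))|) (Set.Ioi 0) := by
    intro r hr
    have hr0 : 0 < r := hr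
    simp only [hf]
    rw [abs_mul (r ^ m), abs_of_pos (pow_pos hr0 m)]
    ring
  have hint : IntegrableOn (fun r : ℝ => r ^ m * f r) (Set.Ioi 0) :=
    (integrableOn_congr_fun hr measurableSet_Ioi).2 (hi.const_mul C)
  constructor
  · rw [← integrable_norm_iff hc.aestronglyMeasurable]
    simp only [Real.norm_eq_abs, habs]
    rw [integrable_fun_norm_addHaar]
    simpa using hint
  · simp only [habs]
    rw [integral_fun_norm_addHaar]
    simp only [finrank_euclideanSpace, Fintype.card_fin, Nat.add_sub_cancel, smul_eq_mul,
      nsmul_eq_mul]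
    rw [setIntegral_congr_fun measurableSet_Ioi hr, integral_const_mul, he, Measure.real,
      EuclideanSpace.volume_ball]
    have hG : 0 < Real.Gamma (((m : ℝ) + 1) / 2) := Real.Gamma_pos_of_pos (by positivity)
    have hG1 : Real.Gamma (((m : ℝ) + 1) / 2 + 1) =
      ((m : ℝ) + 1) / 2 * Real.Gamma (((m : ℝ) + 1) / 2) :=
      Real.Gamma_add_one (by positivity)
    have hsq : ∀ a : ℝ, 0 ≤ a → √a ^ (m + 1) = a ^ (((m : ℝ) + 1) / 2) := by
      intro a ha
      rw [Real.sqrt_eq_rpow, ← Real.rpow_natCast, ← Real.rpow_mul ha]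
      congr 1
      push_cast
      ring
    simp only [ENNReal.ofReal_one, one_pow, one_mul, Fintype.card_fin]
    push_cast
    rw [hG1, ENNReal.toReal_ofReal (by positivity), hC, hsq _ Real.pi_pos.le,
      hsq _ (by positivity)]
    push_cast
    have e1 : Real.exp (-((m : ℝ) + 1) / 2) = (Real.exp 1) ^ (-(((m : ℝ) + 1) / 2)) := by
      rw [← Real.exp_mul]; congr 1; ring
    rw [e1, neg_div, Real.rpow_neg (by positivity), Real.rpow_neg (by positivity),
      Real.mul_rpow (by positivity) hy.le, Real.mul_rpow (by positivity) hy.le,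
      Real.mul_rpow (by positivity) Real.pi_pos.le,
      Real.div_rpow (by positivity) (by positivity),
      Real.mul_rpow (by positivity) (by positivity)]
    field_simp


lemma conv_integrable {d : ℕ} (f : EuclideanSpace ℝ (Fin d) → ℝ) (hf : StronglyMeasurable f)
    (hi : Integrable f) (μ : Measure (EuclideanSpace ℝ (Fin d))) [IsProbabilityMeasure μ] :
    Integrable (fun p : EuclideanSpace ℝ (Fin d) × EuclideanSpace ℝ (Fin d) => f (p.1 - p.2))
      (volume.prod μ) := by
  rw [integrable_prod_iff']
  · refine ⟨Filter.Eventually.of_forall fun z => hi.comp_sub_right z, ?_⟩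
    simp only [integral_sub_right_eq_self (fun x => ‖f x‖)]
    exact integrable_const _
  · exact (hf.comp_measurable (measurable_fst.sub measurable_snd)).aestronglyMeasurable

lemma conv_le {d : ℕ} (f : EuclideanSpace ℝ (Fin d) → ℝ) (hf : StronglyMeasurable f)
    (hi : Integrable f) (μ : Measure (EuclideanSpace ℝ (Fin d))) [IsProbabilityMeasure μ] :
    ∫ x, |∫ z, f (x - z) ∂μ| ≤ ∫ x, |f x| := by
  have h := conv_integrable f hf hi μ
  calc ∫ x, |∫ z, f (x - z) ∂μ| ≤ ∫ x, ∫ z, |f (x - z)| ∂μ := by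
        apply integral_mono h.integral_prod_left.abs h.abs.integral_prod_left
        intro x
        exact abs_integral_le_integral_abs
    _ = ∫ z, (∫ x, |f (x - z)|) ∂μ := integral_integral_swap h.abs
    _ = ∫ x, |f x| := by
        simp only [integral_sub_right_eq_self (fun x => |f x|)]
        simp

theorem statement6 {d : ℕ} (μ ν : Measure (EuclideanSpace ℝ (Fin d)))
    [IsProbabilityMeasure μ] [IsProbabilityMeasure ν] (y : ℝ) (hy : 0 < y) :
    (∫ x, |∫ z, gaussDy d y (x - z) ∂(μ ∗ ν)| ≤ ∫ x, |∫ z, gaussDy d y (x - z) ∂ν|) ∧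
    (∫ x, |gaussDy d y x| =
      1 / y * (2 / Real.Gamma ((d : ℝ) / 2)) * ((d : ℝ) / (2 * Real.exp 1)) ^ ((d : ℝ) / 2)) ∧
    (∫ x, |∫ z, gaussDy d y (x - z) ∂μ| ≤
      1 / y * (2 / Real.Gamma ((d : ℝ) / 2)) * ((d : ℝ) / (2 * Real.exp 1)) ^ ((d : ℝ) / 2)) := by
  obtain ⟨hi, he⟩ := gaussDy_main d y hy
  have hc : Continuous (gaussDy d y) := by
    rw [funext (gaussDy_eq d y hy)]
    fun_prop
  have hm : StronglyMeasurable (gaussDy d y) := hc.stronglyMeasurable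
  refine ⟨?_, he, (conv_le _ hm hi μ).trans_eq he⟩
  have hν := conv_integrable _ hm hi ν
  have hgm : StronglyMeasurable fun x => ∫ z, gaussDy d y (x - z) ∂ν :=
    StronglyMeasurable.integral_prod_right (f := fun x z => gaussDy d y (x - z))
      (hm.comp_measurable (measurable_fst.sub measurable_snd))
  refine le_trans (le_of_eq ?_) (conv_le (fun x => ∫ z, gaussDy d y (x - z) ∂ν) hgm
    hν.integral_prod_left μ)
  apply integral_congr_ae
  filter_upwards [(conv_integrable _ hm hi (μ ∗ ν)).prod_right_ae] with x hx
  rw [integral_conv hx]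
  simp only [sub_add_eq_sub_sub]
end
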